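/- arXiv:1001.4489 — 5 statements merged into one kernel-verified Lean document; each statement's English description precedes it below -/
import Mathlib

section
/- Let n ≥ 3 and p > n/(n−2). Then there exists a constant c̃ > 0 such that the function u(x) = c̃·(1+|x|²)^{−1/(p−1)} is smooth, positive, and satisfies −Δu(x) ≥ u(x)^p for every x ∈ ℝⁿ. -/
/-!
Write `s = 1 + |x|²` and `a = 1 / (p - 1)`, so that `u = c s ^ (-a)`.  Differentiating twice along
the coordinate directions (`hess_diag`) and summing gives (`neg_lap_formula`)

  `-Δu = 2 a c ((n - 2 - 2 a) s + 2 (a + 1)) s ^ (-a - 2)`.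

The condition `p > n / (n - 2)` says exactly that `n - 2 - 2 a > 0`, hence with
`K = 2 a (n - 2 - 2 a) > 0` one has `-Δu ≥ K c s ^ (-a - 1)`.  Since `a p = a + 1`,
`u ^ p = c ^ p s ^ (-a - 1)`, and the choice `c = K ^ a` makes `c ^ p = K c`.
-/

open MeasureTheory Real Set

noncomputable section

/-- The Hessian matrix of a function `φ : ℝⁿ → ℝ` at a point `x`. -/
def hessianMatrix {n : ℕ} (φ : EuclideanSpace ℝ (Fin n) → ℝ)
    (x : EuclideanSpace ℝ (Fin n)) : Matrix (Fin n) (Fin n) ℝ :=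
  Matrix.of fun i j =>
    iteratedFDeriv ℝ 2 φ x ![EuclideanSpace.single i 1, EuclideanSpace.single j 1]

/-- The Laplacian of `φ : ℝⁿ → ℝ`: the trace of the Hessian. -/
def lap {n : ℕ} (φ : EuclideanSpace ℝ (Fin n) → ℝ) (x : EuclideanSpace ℝ (Fin n)) : ℝ :=
  (hessianMatrix φ x).trace

/-- Hypothesis (H1): uniform ellipticity with constants `0 < lam ≤ Lam`. -/
def SatisfiesH1 {n : ℕ} (lam Lam : ℝ) (F : Matrix (Fin n) (Fin n) ℝ → ℝ) : Prop :=
  ∀ M N : Matrix (Fin n) (Fin n) ℝ, M.IsSymm → N.IsSymm → N.PosSemidef →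
    lam * N.trace ≤ F (M - N) - F M ∧ F (M - N) - F M ≤ Lam * N.trace

/-- Hypothesis (H2): positive homogeneity. -/
def SatisfiesH2 {n : ℕ} (F : Matrix (Fin n) (Fin n) ℝ → ℝ) : Prop :=
  ∀ t : ℝ, 0 ≤ t → ∀ M : Matrix (Fin n) (Fin n) ℝ, M.IsSymm → F (t • M) = t * F M

/-- `u` is a viscosity supersolution of `F(D²u) = g` in `Ω`. -/
def ViscositySupersolution {n : ℕ} (F : Matrix (Fin n) (Fin n) ℝ → ℝ)
    (Ω : Set (EuclideanSpace ℝ (Fin n))) (g u : EuclideanSpace ℝ (Fin n) → ℝ) : Prop :=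
  ∀ x₀ ∈ Ω, ∀ φ : EuclideanSpace ℝ (Fin n) → ℝ, ContDiffAt ℝ 2 φ x₀ →
    IsLocalMinOn (fun x => u x - φ x) Ω x₀ → g x₀ ≤ F (hessianMatrix φ x₀)

/-- `u` is a viscosity subsolution of `F(D²u) = g` in `Ω`. -/
def ViscositySubsolution {n : ℕ} (F : Matrix (Fin n) (Fin n) ℝ → ℝ)
    (Ω : Set (EuclideanSpace ℝ (Fin n))) (g u : EuclideanSpace ℝ (Fin n) → ℝ) : Prop :=
  ∀ x₀ ∈ Ω, ∀ φ : EuclideanSpace ℝ (Fin n) → ℝ, ContDiffAt ℝ 2 φ x₀ →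
    IsLocalMaxOn (fun x => u x - φ x) Ω x₀ → F (hessianMatrix φ x₀) ≤ g x₀

/-- `u` is a viscosity solution of `F(D²u) = g` in `Ω`. -/
def ViscositySolution {n : ℕ} (F : Matrix (Fin n) (Fin n) ℝ → ℝ)
    (Ω : Set (EuclideanSpace ℝ (Fin n))) (g u : EuclideanSpace ℝ (Fin n) → ℝ) : Prop :=
  ViscositySubsolution F Ω g u ∧ ViscositySupersolution F Ω g u

/-- `Φ` is a fundamental solution of `F` with scaling exponent `a`. -/
def IsFundamentalSolution {n : ℕ} (F : Matrix (Fin n) (Fin n) ℝ → ℝ)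
    (Φ : EuclideanSpace ℝ (Fin n) → ℝ) (a : ℝ) : Prop :=
  ContinuousOn Φ {x : EuclideanSpace ℝ (Fin n) | x ≠ 0} ∧
  (¬ ∃ c : ℝ, ∀ x : EuclideanSpace ℝ (Fin n), x ≠ 0 → Φ x = c) ∧
  ViscositySolution F {x : EuclideanSpace ℝ (Fin n) | x ≠ 0} (fun _ => 0) Φ ∧
  (a = 0 → ∀ σ : ℝ, 0 < σ → ∀ x : EuclideanSpace ℝ (Fin n), x ≠ 0 →
    Φ x = Φ (σ • x) + Real.log σ) ∧
  (a ≠ 0 → ∀ σ : ℝ, 0 < σ → ∀ x : EuclideanSpace ℝ (Fin n), x ≠ 0 →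
    Φ x = σ ^ a * Φ (σ • x) ∧ 0 < a * Φ x)

/-- `Ω ⊆ ℝⁿ` is an exterior domain. -/
def IsExteriorDomain {n : ℕ} (Ω : Set (EuclideanSpace ℝ (Fin n))) : Prop :=
  IsOpen Ω ∧ IsConnected Ω ∧ ∃ R : ℝ, 0 < R ∧
    (Metric.ball (0 : EuclideanSpace ℝ (Fin n)) R)ᶜ ⊆ Ω ∧
    Ω ⊆ {x : EuclideanSpace ℝ (Fin n) | x ≠ 0}

/-- The Pucci maximal operator `𝒫⁺_{lam,Lam}`, defined via the eigenvalues. -/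
def pucciPlus {n : ℕ} (lam Lam : ℝ) (M : Matrix (Fin n) (Fin n) ℝ) : ℝ :=
  if hM : M.IsHermitian then
    -(lam * ∑ j ∈ Finset.univ.filter fun j => 0 < hM.eigenvalues j, hM.eigenvalues j)
      - Lam * ∑ j ∈ Finset.univ.filter fun j => hM.eigenvalues j < 0, hM.eigenvalues j
  else 0

/-- The Pucci minimal operator `𝒫⁻_{lam,Lam}`, defined via the eigenvalues. -/
def pucciMinus {n : ℕ} (lam Lam : ℝ) (M : Matrix (Fin n) (Fin n) ℝ) : ℝ :=
  if hM : M.IsHermitian then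
    -(Lam * ∑ j ∈ Finset.univ.filter fun j => 0 < hM.eigenvalues j, hM.eigenvalues j)
      - lam * ∑ j ∈ Finset.univ.filter fun j => hM.eigenvalues j < 0, hM.eigenvalues j
  else 0

/-- The radial functions `ξ_α`. -/
def xiFun {n : ℕ} (α : ℝ) (x : EuclideanSpace ℝ (Fin n)) : ℝ :=
  if 0 < α then ‖x‖ ^ (-α) else if α = 0 then -Real.log ‖x‖ else -(‖x‖ ^ (-α))

end

lemma contDiff_profile {n : ℕ} (c b : ℝ) {m : WithTop ℕ∞} :
    ContDiff ℝ m (fun x : EuclideanSpace ℝ (Fin n) => c * (1 + ‖x‖ ^ 2) ^ b) := by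
  refine contDiff_const.mul (ContDiff.rpow_const_of_ne ?_ fun x => by positivity)
  exact contDiff_const.add (contDiff_norm_sq ℝ)

lemma fderiv_profile {n : ℕ} (c b : ℝ) (x v : EuclideanSpace ℝ (Fin n)) :
    fderiv ℝ (fun y : EuclideanSpace ℝ (Fin n) => c * (1 + ‖y‖ ^ 2) ^ b) x v =
      2 * b * c * (1 + ‖x‖ ^ 2) ^ (b - 1) * inner ℝ x v := by
  have hs : (1 + ‖x‖ ^ 2 : ℝ) ≠ 0 := by positivity
  have h1 : HasFDerivAt (fun y : EuclideanSpace ℝ (Fin n) => 1 + ‖y‖ ^ 2)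
      (2 • innerSL ℝ x) x := ((hasStrictFDerivAt_norm_sq x).hasFDerivAt).const_add 1
  have h2 := (h1.rpow_const (p := b) (Or.inl hs)).const_mul c
  rw [h2.fderiv]
  simp
  ring

/-- The second derivative of the profile in a coordinate direction. -/
lemma hess_diag {n : ℕ} (c b : ℝ) (x : EuclideanSpace ℝ (Fin n)) (i : Fin n) :
    hessianMatrix (fun y : EuclideanSpace ℝ (Fin n) => c * (1 + ‖y‖ ^ 2) ^ b) x i i =
      2 * b * c * (1 + ‖x‖ ^ 2) ^ (b - 1) +
        4 * b * (b - 1) * c * (1 + ‖x‖ ^ 2) ^ (b - 2) * x i ^ 2 := by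
  set f : EuclideanSpace ℝ (Fin n) → ℝ := fun y => c * (1 + ‖y‖ ^ 2) ^ b with hf
  set w : EuclideanSpace ℝ (Fin n) := EuclideanSpace.single i 1 with hw
  have hD : DifferentiableAt ℝ (fderiv ℝ f) x :=
    ((contDiff_profile c b (m := 2)).fderiv_right (m := 1) (by norm_num)).differentiable
      (by norm_num) x
  have hfun : (fun y => fderiv ℝ f y w) =
      fun y => 2 * b * c * (1 + ‖y‖ ^ 2) ^ (b - 1) * inner ℝ w y := by
    funext y
    rw [hf, fderiv_profile, real_inner_comm]
  have hg : DifferentiableAt ℝ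
      (fun y : EuclideanSpace ℝ (Fin n) => 2 * b * c * (1 + ‖y‖ ^ 2) ^ (b - 1)) x :=
    (contDiff_profile (2 * b * c) (b - 1) (m := 1)).differentiable (by norm_num) x
  have hl : HasFDerivAt (fun y : EuclideanSpace ℝ (Fin n) => inner ℝ w y) (innerSL ℝ w) x :=
    (innerSL ℝ w).hasFDerivAt
  -- The direction `w` is fixed, so the second derivative is the derivative of `y ↦ fderiv ℝ f y w`.
  have key : fderiv ℝ (fderiv ℝ f) x w w = fderiv ℝ (fun y => fderiv ℝ f y w) x w := by
    rw [(hD.hasFDerivAt.clm_apply (hasFDerivAt_const w x)).fderiv]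
    simp
  have hww : inner ℝ w w = (1 : ℝ) := by simp [hw]
  have hxw : inner ℝ x w = x i := by simp [hw, EuclideanSpace.inner_single_right]
  have hwx : inner ℝ w x = x i := by simp [hw, EuclideanSpace.inner_single_left]
  change iteratedFDeriv ℝ 2 f x ![w, w] = _
  rw [iteratedFDeriv_two_apply]
  change fderiv ℝ (fderiv ℝ f) x w w = _
  rw [key, hfun, (hg.hasFDerivAt.fun_mul hl).fderiv]
  simp only [add_apply, smul_apply, innerSL_apply_apply,
    smul_eq_mul, fderiv_profile, hww, hxw, hwx]
  rw [show b - 1 - 1 = b - 2 by ring]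
  ring

lemma neg_lap_formula {n : ℕ} (c a : ℝ) (x : EuclideanSpace ℝ (Fin n)) :
    -(lap (fun y : EuclideanSpace ℝ (Fin n) => c * (1 + ‖y‖ ^ 2) ^ (-a)) x) =
      2 * a * c * ((n - 2 - 2 * a) * (1 + ‖x‖ ^ 2) + 2 * (a + 1)) *
        (1 + ‖x‖ ^ 2) ^ (-a - 2) := by
  have hs : (0 : ℝ) < 1 + ‖x‖ ^ 2 := by positivity
  have hpow : (1 + ‖x‖ ^ 2) ^ (-a - 1) = (1 + ‖x‖ ^ 2) ^ (-a - 2) * (1 + ‖x‖ ^ 2) := by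
    rw [← Real.rpow_add_one hs.ne']
    congr 1
    ring
  have hsum : ∑ i, x i ^ 2 = ‖x‖ ^ 2 := (EuclideanSpace.real_norm_sq_eq x).symm
  simp only [lap, Matrix.trace, Matrix.diag_apply, hess_diag, Finset.sum_add_distrib,
    ← Finset.mul_sum, hsum, Finset.sum_const, Finset.card_univ, Fintype.card_fin, nsmul_eq_mul]
  rw [hpow]
  ring

theorem emden_fowler_explicit_global_supersolution
    (n : ℕ) (hn : 3 ≤ n) (p : ℝ) (hp : (n : ℝ) / ((n : ℝ) - 2) < p) :
    ∃ c : ℝ, 0 < c ∧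
      ContDiff ℝ (⊤ : ℕ∞)
        (fun x : EuclideanSpace ℝ (Fin n) => c * (1 + ‖x‖ ^ 2) ^ (-(1 / (p - 1)))) ∧
      (∀ x : EuclideanSpace ℝ (Fin n), 0 < c * (1 + ‖x‖ ^ 2) ^ (-(1 / (p - 1)))) ∧
      ∀ x : EuclideanSpace ℝ (Fin n),
        (c * (1 + ‖x‖ ^ 2) ^ (-(1 / (p - 1)))) ^ p ≤
          -(lap (fun y : EuclideanSpace ℝ (Fin n) =>
              c * (1 + ‖y‖ ^ 2) ^ (-(1 / (p - 1)))) x) := by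
  have hn' : (3 : ℝ) ≤ n := by exact_mod_cast hn
  have hn2 : (0 : ℝ) < n - 2 := by linarith
  have hnp : (n : ℝ) < p * (n - 2) := (div_lt_iff₀ hn2).1 hp
  -- `p ≤ 1` would give `n < p (n - 2) ≤ n - 2`.
  have hp1 : 0 < p - 1 := by
    by_contra! h
    nlinarith
  set a : ℝ := 1 / (p - 1) with ha
  have ha0 : 0 < a := by positivity
  have hap : a * (p - 1) = 1 := by rw [ha]; field_simp
  have hgap : 0 < (n : ℝ) - 2 - 2 * a := by
    have h : 2 * a < n - 2 := by
      rw [ha, mul_one_div, div_lt_iff₀ hp1]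
      linarith
    linarith
  set K : ℝ := 2 * a * (n - 2 - 2 * a) with hK
  have hK0 : 0 < K := by positivity
  have hc0 : 0 < K ^ a := by positivity
  refine ⟨K ^ a, hc0, contDiff_profile _ _, fun x => by positivity, fun x => ?_⟩
  have hs : (0 : ℝ) < 1 + ‖x‖ ^ 2 := by positivity
  rw [neg_lap_formula, Real.mul_rpow hc0.le (by positivity), ← Real.rpow_mul hs.le,
    ← Real.rpow_mul hK0.le, show a * p = a + 1 by linarith,
    show -a * p = -a - 2 + 1 by linarith, Real.rpow_add_one hK0.ne', Real.rpow_add_one hs.ne']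
  -- The part of `-Δu` dropped in the lower bound `-Δu ≥ K c s ^ (-a - 1)`.
  have hrest : 0 ≤ 2 * a * K ^ a * (2 * (a + 1)) * (1 + ‖x‖ ^ 2) ^ (-a - 2) := by positivity
  have hsplit : 2 * a * K ^ a * ((n - 2 - 2 * a) * (1 + ‖x‖ ^ 2) + 2 * (a + 1)) *
      (1 + ‖x‖ ^ 2) ^ (-a - 2) =
      K ^ a * K * ((1 + ‖x‖ ^ 2) ^ (-a - 2) * (1 + ‖x‖ ^ 2)) +
        2 * a * K ^ a * (2 * (a + 1)) * (1 + ‖x‖ ^ 2) ^ (-a - 2) := by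
    generalize K ^ a = C
    rw [hK]
    ring
  linarith
end

section
/- Let n ≥ 1 and 0 < λ ≤ Λ. For every n×n real symmetric matrix M with eigenvalues μ_1,…,μ_n counted with multiplicity: sup{ −tr(AM) : A an n×n real symmetric matrix with λI ≤ A ≤ ΛI } = −λ·∑_{μ_j>0} μ_j − Λ·∑_{μ_j<0} μ_j, and inf{ −tr(AM) : A an n×n real symmetric matrix with λI ≤ A ≤ ΛI } = −Λ·∑_{μ_j>0} μ_j − λ·∑_{μ_j<0} μ_j; in particular both the supremum and the infimum are attained. -/
/-!
Diagonalise `M = U D Uᴴ` with `U` orthogonal and `D = diag(μ)`. By cyclicity of the trace,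
`tr (A M) = ∑ i, (Uᴴ A U) i i * μ i`, and `λ I ≤ A ≤ Λ I` puts every diagonal entry of `Uᴴ A U`
in `[λ, Λ]` (`exists_weights_of_admissible`). Conversely `U diag(d) Uᴴ` is admissible for any
weights `d` with values in `[λ, Λ]` and realises `∑ i, d i * μ i`
(`exists_admissible_of_weights`). So the problem is to optimise `∑ i, d i * μ i` over the box
`[λ, Λ]ⁿ`, which is done coordinate by coordinate according to the sign of `μ i`.
-/

open MeasureTheory Real Set

namespace PucciAux

open Matrix

variable {n : ℕ}

/-- `A` is symmetric with `λ I ≤ A ≤ Λ I`, the order being that of positive semidefiniteness. -/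
def Admissible (lam Lam : ℝ) (A : Matrix (Fin n) (Fin n) ℝ) : Prop :=
  A.IsSymm ∧ (A - lam • (1 : Matrix (Fin n) (Fin n) ℝ)).PosSemidef ∧
    ((Lam • (1 : Matrix (Fin n) (Fin n) ℝ)) - A).PosSemidef

lemma exists_diagonalization {M : Matrix (Fin n) (Fin n) ℝ} (hM : M.IsHermitian) :
    ∃ U : Matrix (Fin n) (Fin n) ℝ, Uᴴ * U = 1 ∧ U * Uᴴ = 1 ∧
      M = U * Matrix.diagonal hM.eigenvalues * Uᴴ := by
  refine ⟨hM.eigenvectorUnitary, ?_, ?_, ?_⟩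
  · exact Unitary.coe_star_mul_self hM.eigenvectorUnitary
  · exact Unitary.coe_mul_star_self hM.eigenvectorUnitary
  · have h := hM.spectral_theorem
    rw [Unitary.conjStarAlgAut_apply] at h
    exact h

lemma trace_mul_diagonal_eq_sum (B : Matrix (Fin n) (Fin n) ℝ) (μ : Fin n → ℝ) :
    (B * Matrix.diagonal μ).trace = ∑ i, B i i * μ i := by
  simp [Matrix.trace, Matrix.mul_diagonal]

/-- The weights are the diagonal entries of `A` in an orthonormal eigenbasis of `M`. -/
lemma exists_weights_of_admissible {lam Lam : ℝ} {M A : Matrix (Fin n) (Fin n) ℝ}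
    (hM : M.IsHermitian) (hA : Admissible lam Lam A) :
    ∃ d : Fin n → ℝ, (∀ i, lam ≤ d i ∧ d i ≤ Lam) ∧
      (A * M).trace = ∑ i, d i * hM.eigenvalues i := by
  obtain ⟨U, hU, -, hMU⟩ := exists_diagonalization hM
  obtain ⟨-, h1, h2⟩ := hA
  refine ⟨fun i => (Uᴴ * A * U) i i, fun i => ⟨?_, ?_⟩, ?_⟩
  · have h := (h1.conjTranspose_mul_mul_same U).diag_nonneg (i := i)
    rw [Matrix.mul_sub, Matrix.sub_mul, Matrix.mul_smul, Matrix.smul_mul, Matrix.mul_one, hU] at h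
    simpa using h
  · have h := (h2.conjTranspose_mul_mul_same U).diag_nonneg (i := i)
    rw [Matrix.mul_sub, Matrix.sub_mul, Matrix.mul_smul, Matrix.smul_mul, Matrix.mul_one, hU] at h
    simpa using h
  · rw [← trace_mul_diagonal_eq_sum]
    conv_lhs => rw [hMU, ← Matrix.mul_assoc, Matrix.trace_mul_comm]
    simp only [Matrix.mul_assoc]

/-- The matrix `A` is diagonal, with entries `d`, in an orthonormal eigenbasis of `M`. -/
lemma exists_admissible_of_weights {lam Lam : ℝ} {M : Matrix (Fin n) (Fin n) ℝ}
    (hM : M.IsHermitian) {d : Fin n → ℝ} (hd : ∀ i, lam ≤ d i ∧ d i ≤ Lam) :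
    ∃ A : Matrix (Fin n) (Fin n) ℝ, Admissible lam Lam A ∧
      (A * M).trace = ∑ i, d i * hM.eigenvalues i := by
  obtain ⟨U, hU, hU', hMU⟩ := exists_diagonalization hM
  have hconst : ∀ c : ℝ, c • (1 : Matrix (Fin n) (Fin n) ℝ) =
      U * Matrix.diagonal (fun _ => c) * Uᴴ := by
    intro c
    rw [← Matrix.smul_one_eq_diagonal, Matrix.mul_smul, Matrix.smul_mul, Matrix.mul_one, hU']
  refine ⟨U * Matrix.diagonal d * Uᴴ, ⟨?_, ?_, ?_⟩, ?_⟩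
  · simp [Matrix.IsSymm, Matrix.conjTranspose_eq_transpose_of_trivial, Matrix.mul_assoc]
  · rw [hconst, ← Matrix.sub_mul, ← Matrix.mul_sub, Matrix.diagonal_sub]
    exact (PosSemidef.diagonal fun i => sub_nonneg.2 (hd i).1).mul_mul_conjTranspose_same U
  · rw [hconst, ← Matrix.sub_mul, ← Matrix.mul_sub, Matrix.diagonal_sub]
    exact (PosSemidef.diagonal fun i => sub_nonneg.2 (hd i).2).mul_mul_conjTranspose_same U
  · have hprod : U * Matrix.diagonal d * Uᴴ * M =
        U * (Matrix.diagonal d * Matrix.diagonal hM.eigenvalues * Uᴴ) := by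
      calc U * Matrix.diagonal d * Uᴴ * M
          = U * Matrix.diagonal d * (Uᴴ * U) * Matrix.diagonal hM.eigenvalues * Uᴴ := by
            conv_lhs => rw [hMU]
            simp only [Matrix.mul_assoc]
        _ = _ := by rw [hU, Matrix.mul_one]; simp only [Matrix.mul_assoc]
    rw [hprod, Matrix.trace_mul_comm, Matrix.mul_assoc, hU, Matrix.mul_one,
      trace_mul_diagonal_eq_sum]
    simp

/-- The eigenvalue expression is the objective at the weights equal to `a` where `μ` is positive
and `b` elsewhere; zero entries of `μ` do not contribute. -/
lemma sign_split_eq_sum (a b : ℝ) (μ : Fin n → ℝ) :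
    -(a * ∑ j ∈ Finset.univ.filter fun j => 0 < μ j, μ j)
        - b * ∑ j ∈ Finset.univ.filter fun j => μ j < 0, μ j
      = -∑ j, (if 0 < μ j then a else b) * μ j := by
  rw [Finset.sum_filter, Finset.sum_filter, Finset.mul_sum, Finset.mul_sum, ← neg_add',
    ← Finset.sum_add_distrib]
  congr 1
  refine Finset.sum_congr rfl fun j _ => ?_
  rcases lt_trichotomy (μ j) 0 with h | h | h
  · simp [h, h.not_gt]
  · simp [h]
  · simp [h, h.not_gt]

end PucciAux

theorem pucci_eigenvalue_formula
    (n : ℕ) (hn : 1 ≤ n) (lam Lam : ℝ) (hlam : 0 < lam) (hLam : lam ≤ Lam)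
    (M : Matrix (Fin n) (Fin n) ℝ) (hM : M.IsHermitian) :
    IsGreatest
      {t : ℝ | ∃ A : Matrix (Fin n) (Fin n) ℝ, A.IsSymm ∧
        (A - lam • (1 : Matrix (Fin n) (Fin n) ℝ)).PosSemidef ∧
        ((Lam • (1 : Matrix (Fin n) (Fin n) ℝ)) - A).PosSemidef ∧
        t = -(A * M).trace}
      (-(lam * ∑ j ∈ Finset.univ.filter fun j => 0 < hM.eigenvalues j, hM.eigenvalues j)
        - Lam * ∑ j ∈ Finset.univ.filter fun j => hM.eigenvalues j < 0, hM.eigenvalues j) ∧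
    IsLeast
      {t : ℝ | ∃ A : Matrix (Fin n) (Fin n) ℝ, A.IsSymm ∧
        (A - lam • (1 : Matrix (Fin n) (Fin n) ℝ)).PosSemidef ∧
        ((Lam • (1 : Matrix (Fin n) (Fin n) ℝ)) - A).PosSemidef ∧
        t = -(A * M).trace}
      (-(Lam * ∑ j ∈ Finset.univ.filter fun j => 0 < hM.eigenvalues j, hM.eigenvalues j)
        - lam * ∑ j ∈ Finset.univ.filter fun j => hM.eigenvalues j < 0, hM.eigenvalues j) := by
  have hweights : ∀ (p : Prop) [Decidable p],
      (lam ≤ (if p then lam else Lam) ∧ (if p then lam else Lam) ≤ Lam) ∧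
      (lam ≤ (if p then Lam else lam) ∧ (if p then Lam else lam) ≤ Lam) := by
    intro p _
    split_ifs <;> simp [hLam]
  rw [PucciAux.sign_split_eq_sum, PucciAux.sign_split_eq_sum]
  refine ⟨⟨?_, ?_⟩, ⟨?_, ?_⟩⟩
  · obtain ⟨A, ⟨h1, h2, h3⟩, h⟩ := PucciAux.exists_admissible_of_weights hM
      (fun i => (hweights (0 < hM.eigenvalues i)).1)
    exact ⟨A, h1, h2, h3, by rw [h]⟩
  · rintro t ⟨A, h1, h2, h3, rfl⟩
    obtain ⟨d, hd, h⟩ := PucciAux.exists_weights_of_admissible hM ⟨h1, h2, h3⟩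
    rw [h]
    refine neg_le_neg (Finset.sum_le_sum fun i _ => ?_)
    split_ifs with hi
    · exact mul_le_mul_of_nonneg_right (hd i).1 hi.le
    · exact mul_le_mul_of_nonpos_right (hd i).2 (not_lt.1 hi)
  · obtain ⟨A, ⟨h1, h2, h3⟩, h⟩ := PucciAux.exists_admissible_of_weights hM
      (fun i => (hweights (0 < hM.eigenvalues i)).2)
    exact ⟨A, h1, h2, h3, by rw [h]⟩
  · rintro t ⟨A, h1, h2, h3, rfl⟩
    obtain ⟨d, hd, h⟩ := PucciAux.exists_weights_of_admissible hM ⟨h1, h2, h3⟩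
    rw [h]
    refine neg_le_neg (Finset.sum_le_sum fun i _ => ?_)
    split_ifs with hi
    · exact mul_le_mul_of_nonneg_right (hd i).2 hi.le
    · exact mul_le_mul_of_nonpos_right (hd i).1 (not_lt.1 hi)
end

section
/- Let n ≥ 1, 0 < λ ≤ Λ, and F : Sym_n → ℝ. Then F satisfies (H1) and (H2) with constants λ, Λ if and only if there exist nonempty index sets 𝒜 and ℬ and a family (A^{α,β})_{α∈𝒜, β∈ℬ} of n×n real symmetric matrices satisfying λI ≤ A^{α,β} ≤ ΛI for all α ∈ 𝒜 and β ∈ ℬ, such that F(M) = sup_{α∈𝒜} inf_{β∈ℬ} ( −tr(A^{α,β} M) ) for every M ∈ Sym_n (all the infima and the supremum being finite). -/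
/-!
The backward direction holds because each `M ↦ -tr (A M)` with `lam I ≤ A ≤ Lam I` is elliptic and
positively homogeneous, and both properties survive infima and suprema.

For the forward direction everything reduces to a two-point property (`exists_two_point`): for all
symmetric `P, Q` there is an elliptic matrix `A = A(P, Q)` with `F P ≤ -tr (A P)` and
`-tr (A Q) ≤ F Q`. Both index sets are then the space of symmetric matrices: in
`sup_P inf_Q -tr (A(P, Q) M)` the choice `Q = M` bounds every infimum above by `F M`, and the choice
`P = M` bounds the corresponding infimum below by `F M`.

The two-point property is a minimax argument. The elliptic matrices form a compact convex set, so
its image under `A ↦ (tr (A P), tr (A Q))` either meets the quadrant `x ≤ -F P`, `y ≥ -F Q` or is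
strictly separated from it by a functional `(x, y) ↦ -s x + t y` with `s, t ≥ 0`. By homogeneity,
separation says that `F (s P) - F (t Q)` exceeds `-tr (A (s P - t Q))` for every elliptic `A`.
But ellipticity bounds that increment by the maximal Pucci operator at `s P - t Q`, which is
attained at an elliptic matrix diagonal in an eigenbasis of `s P - t Q` (`exists_increment_le`).
-/

open MeasureTheory Real Set

/-- The elliptic matrices: symmetric `A` with `lam I ≤ A ≤ Lam I`. -/
def ellipticSet (n : ℕ) (lam Lam : ℝ) : Set (Matrix (Fin n) (Fin n) ℝ) :=
  {A | A.IsSymm ∧ (A - lam • (1 : Matrix (Fin n) (Fin n) ℝ)).PosSemidef ∧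
    (Lam • (1 : Matrix (Fin n) (Fin n) ℝ) - A).PosSemidef}

open scoped MatrixOrder Matrix.Norms.L2Operator in
/-- The Frobenius pairing of two positive semidefinite matrices is nonnegative: writing
`N = Bᴴ B`, it equals the trace of `B A Bᴴ`. -/
lemma trace_mul_nonneg_of_posSemidef {n : ℕ} {A N : Matrix (Fin n) (Fin n) ℝ}
    (hA : A.PosSemidef) (hN : N.PosSemidef) : 0 ≤ (A * N).trace := by
  obtain ⟨B, rfl⟩ := CStarAlgebra.nonneg_iff_eq_star_mul_self.mp hN.nonneg
  rw [← Matrix.mul_assoc, Matrix.trace_mul_comm, ← Matrix.mul_assoc]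
  exact (hA.mul_mul_conjTranspose_same B).trace_nonneg

lemma trace_mul_bounds {n : ℕ} {lam Lam : ℝ} {A N : Matrix (Fin n) (Fin n) ℝ}
    (hA : A ∈ ellipticSet n lam Lam) (hN : N.PosSemidef) :
    lam * N.trace ≤ (A * N).trace ∧ (A * N).trace ≤ Lam * N.trace := by
  have h1 := trace_mul_nonneg_of_posSemidef hA.2.1 hN
  have h2 := trace_mul_nonneg_of_posSemidef hA.2.2 hN
  simp only [Matrix.sub_mul, Matrix.trace_sub, Matrix.smul_mul, Matrix.one_mul,
    Matrix.trace_smul, smul_eq_mul] at h1 h2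
  constructor <;> linarith

lemma convex_ellipticSet (n : ℕ) (lam Lam : ℝ) : Convex ℝ (ellipticSet n lam Lam) := by
  rintro A ⟨hA, hA1, hA2⟩ B ⟨hB, hB1, hB2⟩ a b ha hb hab
  refine ⟨(hA.smul a).add (hB.smul b), ?_, ?_⟩
  · have h := (hA1.smul ha).add (hB1.smul hb)
    convert h using 1
    obtain rfl : b = 1 - a := by linarith
    module
  · have h := (hA2.smul ha).add (hB2.smul hb)
    convert h using 1
    obtain rfl : b = 1 - a := by linarith
    module

lemma isClosed_posSemidef (n : ℕ) :
    IsClosed {A : Matrix (Fin n) (Fin n) ℝ | A.PosSemidef} := by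
  simp only [Matrix.posSemidef_iff_dotProduct_mulVec, Set.ofPred_and, Set.ofPred_forall]
  refine IsClosed.inter ?_ (isClosed_iInter fun x => ?_)
  · exact isClosed_eq (by fun_prop) continuous_id
  · exact isClosed_le continuous_const (by fun_prop)

/-- The off-diagonal entries are controlled by the diagonal ones by testing against
`e_i ± e_j`. -/
lemma abs_entry_le {n : ℕ} {lam Lam : ℝ} (hlam : 0 < lam) {A : Matrix (Fin n) (Fin n) ℝ}
    (hA : A ∈ ellipticSet n lam Lam) (i j : Fin n) : |A i j| ≤ Lam := by
  obtain ⟨hs, h1, h2⟩ := hA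
  have hA : A.PosSemidef := by
    have h := h1.add (Matrix.PosSemidef.one.smul hlam.le)
    simpa using h
  have hd : ∀ k, A k k ≤ Lam := fun k => by
    have := h2.diag_nonneg (i := k)
    simpa using this
  have hsym : A j i = A i j := hs.apply i j
  have hp := hA.dotProduct_mulVec_nonneg (Pi.single i 1 + Pi.single j 1)
  have hm := hA.dotProduct_mulVec_nonneg (Pi.single i 1 - Pi.single j 1)
  simp [Matrix.mulVec_add, Matrix.mulVec_sub, add_dotProduct, sub_dotProduct, hsym] at hp hm
  rw [abs_le]
  have := hd i
  have := hd j
  constructor <;> linarith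

lemma isCompact_ellipticSet (n : ℕ) {lam Lam : ℝ} (hlam : 0 < lam) :
    IsCompact (ellipticSet n lam Lam) := by
  have hbox : IsCompact (Set.univ.pi fun _ : Fin n => Set.univ.pi fun _ : Fin n =>
      Set.Icc (-Lam) Lam) :=
    isCompact_univ_pi fun _ => isCompact_univ_pi fun _ => isCompact_Icc
  refine hbox.of_isClosed_subset ?_ ?_
  · refine IsClosed.inter (isClosed_eq (f := fun A : Matrix (Fin n) (Fin n) ℝ => A.transpose)
      (by fun_prop) continuous_id) (IsClosed.inter ?_ ?_)
    · exact (isClosed_posSemidef n).preimage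
        (f := fun A => A - lam • (1 : Matrix (Fin n) (Fin n) ℝ)) (by fun_prop)
    · exact (isClosed_posSemidef n).preimage
        (f := fun A => Lam • (1 : Matrix (Fin n) (Fin n) ℝ) - A) (by fun_prop)
  · intro A hA i _ j _
    exact abs_le.1 (abs_entry_le hlam hA i j)

/-- A symmetric `D` splits as `D⁺ - D⁻`, and weighting the eigenspaces of `D` by `lam` where the
eigenvalue is nonnegative and by `Lam` elsewhere gives the elliptic matrix minimizing
`tr (A D)`. -/
lemma exists_extremal {n : ℕ} {lam Lam : ℝ} (hLam : lam ≤ Lam)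
    {D : Matrix (Fin n) (Fin n) ℝ} (hD : D.IsSymm) :
    ∃ A ∈ ellipticSet n lam Lam, ∃ Np Nm : Matrix (Fin n) (Fin n) ℝ,
      Np.PosSemidef ∧ Nm.PosSemidef ∧ D = Np - Nm ∧
      (A * D).trace = lam * Np.trace - Lam * Nm.trace := by
  have hH : D.IsHermitian := by
    rw [Matrix.IsHermitian, Matrix.conjTranspose_eq_transpose_of_trivial]; exact hD
  obtain ⟨U, d, hU, hU', hDU⟩ : ∃ (U : Matrix (Fin n) (Fin n) ℝ) (d : Fin n → ℝ),
      U.conjTranspose * U = 1 ∧ U * U.conjTranspose = 1 ∧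
      D = U * Matrix.diagonal d * U.conjTranspose := by
    refine ⟨hH.eigenvectorUnitary, hH.eigenvalues, ?_, ?_, ?_⟩
    · exact Unitary.coe_star_mul_self hH.eigenvectorUnitary
    · exact Unitary.coe_mul_star_self hH.eigenvectorUnitary
    · have := hH.spectral_theorem
      rw [Unitary.conjStarAlgAut_apply] at this
      exact this
  let c : (Fin n → ℝ) → Matrix (Fin n) (Fin n) ℝ :=
    fun e => U * Matrix.diagonal e * U.conjTranspose
  have hpos : ∀ e, (∀ i, 0 ≤ e i) → (c e).PosSemidef := fun e he =>
    (Matrix.PosSemidef.diagonal he).mul_mul_conjTranspose_same U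
  have hsub : ∀ e f, c e - c f = c (fun i => e i - f i) := fun e f => by
    simp only [c, ← Matrix.diagonal_sub, Matrix.mul_sub, Matrix.sub_mul]
  have hone : ∀ r : ℝ, r • (1 : Matrix (Fin n) (Fin n) ℝ) = c (fun _ => r) := fun r => by
    have : Matrix.diagonal (fun _ : Fin n => r) = r • (1 : Matrix (Fin n) (Fin n) ℝ) := by
      rw [Matrix.smul_one_eq_diagonal]
    simp only [c, this, Matrix.mul_smul, Matrix.smul_mul, Matrix.mul_one, hU']
  have htr : ∀ e, (c e).trace = ∑ i, e i := fun e => by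
    simp only [c]
    rw [Matrix.trace_mul_comm, ← Matrix.mul_assoc, hU, Matrix.one_mul, Matrix.trace_diagonal]
  have hmul : ∀ e f, c e * c f = c (fun i => e i * f i) := fun e f => by
    simp only [c]
    calc U * Matrix.diagonal e * U.conjTranspose * (U * Matrix.diagonal f * U.conjTranspose)
        = U * Matrix.diagonal e * (U.conjTranspose * U) * Matrix.diagonal f * U.conjTranspose := by
          simp only [Matrix.mul_assoc]
      _ = _ := by
          rw [hU, Matrix.mul_one, Matrix.mul_assoc U, Matrix.diagonal_mul_diagonal]
  let a : Fin n → ℝ := fun i => if 0 ≤ d i then lam else Lam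
  refine ⟨c a, ⟨?_, ?_, ?_⟩, c (fun i => max (d i) 0), c (fun i => max (-d i) 0),
    hpos _ fun i => le_max_right _ _, hpos _ fun i => le_max_right _ _, ?_, ?_⟩
  · simp [c, Matrix.IsSymm, Matrix.transpose_mul, Matrix.mul_assoc,
      Matrix.conjTranspose_eq_transpose_of_trivial]
  · rw [hone, hsub]
    refine hpos _ fun i => ?_
    simp only [a]; split_ifs <;> linarith
  · rw [hone, hsub]
    refine hpos _ fun i => ?_
    simp only [a]; split_ifs <;> linarith
  · rw [hsub, hDU]
    change c d = _
    congr 1; funext i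
    rcases le_total 0 (d i) with h | h
    · rw [max_eq_left h, max_eq_right (by linarith)]; ring
    · rw [max_eq_right h, max_eq_left (by linarith)]; ring
  · have hDc : D = c d := hDU
    rw [hDc, hmul, htr, htr, htr, Finset.mul_sum, Finset.mul_sum, ← Finset.sum_sub_distrib]
    refine Finset.sum_congr rfl fun i _ => ?_
    simp only [a]
    split_ifs with h
    · rw [max_eq_left h, max_eq_right (by linarith)]; ring
    · rw [max_eq_right (by linarith), max_eq_left (by linarith)]; ring

/-- Ellipticity bounds increments of `F` by the maximal Pucci operator, attained at some
elliptic `A`. -/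
lemma exists_increment_le {n : ℕ} {lam Lam : ℝ} (hLam : lam ≤ Lam)
    {F : Matrix (Fin n) (Fin n) ℝ → ℝ} (hF : SatisfiesH1 lam Lam F)
    {X Y : Matrix (Fin n) (Fin n) ℝ} (hX : X.IsSymm) (hY : Y.IsSymm) :
    ∃ A ∈ ellipticSet n lam Lam, F X - F Y ≤ -(A * (X - Y)).trace := by
  obtain ⟨A, hA, Np, Nm, hp, hm, hD, htr⟩ := exists_extremal hLam (hX.sub hY)
  have hps : Np.IsSymm := by
    have := hp.isHermitian
    rwa [Matrix.IsHermitian, Matrix.conjTranspose_eq_transpose_of_trivial] at this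
  have hms : Nm.IsSymm := by
    have := hm.isHermitian
    rwa [Matrix.IsHermitian, Matrix.conjTranspose_eq_transpose_of_trivial] at this
  refine ⟨A, hA, ?_⟩
  have h1 := (hF Y Nm hY hms hm).2
  have h2 := (hF X Np hX hps hp).1
  have h3 : X - Np = Y - Nm := by
    rw [sub_eq_sub_iff_add_eq_add] at hD ⊢
    rw [hD, add_comm]
  rw [h3] at h2
  rw [htr]
  linarith

/-- The two-point property: one elliptic matrix lies above `F` at `P` and below `F` at `Q`.
Otherwise the compact convex image of the elliptic matrices under `A ↦ (tr (A P), tr (A Q))` would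
be strictly separated from a quadrant by a functional `(-s, t)` with `s, t ≥ 0`, contradicting the
increment bound between `s P` and `t Q`. -/
lemma exists_two_point {n : ℕ} {lam Lam : ℝ} (hlam : 0 < lam) (hLam : lam ≤ Lam)
    {F : Matrix (Fin n) (Fin n) ℝ → ℝ} (hF : SatisfiesH1 lam Lam F) (hF2 : SatisfiesH2 F)
    {P Q : Matrix (Fin n) (Fin n) ℝ} (hP : P.IsSymm) (hQ : Q.IsSymm) :
    ∃ A ∈ ellipticSet n lam Lam, F P ≤ -(A * P).trace ∧ -(A * Q).trace ≤ F Q := by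
  by_contra! hcon
  let L : Matrix (Fin n) (Fin n) ℝ →ₗ[ℝ] ℝ × ℝ :=
    { toFun := fun A => ((A * P).trace, (A * Q).trace)
      map_add' := fun A B => by simp [Matrix.add_mul]
      map_smul' := fun r A => by simp }
  have hLc : Continuous L := by
    change Continuous fun A : Matrix (Fin n) (Fin n) ℝ => ((A * P).trace, (A * Q).trace)
    fun_prop
  have hdisj : Disjoint (L '' ellipticSet n lam Lam) (Set.Iic (-F P) ×ˢ Set.Ici (-F Q)) := by
    rw [Set.disjoint_left]
    rintro _ ⟨A, hA, rfl⟩ ⟨h1, h2⟩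
    have h1' : (A * P).trace ≤ -F P := h1
    have h2' : -F Q ≤ (A * Q).trace := h2
    have := hcon A hA (by linarith)
    linarith
  obtain ⟨f, u, v, hfu, huv, hfv⟩ := geometric_hahn_banach_compact_closed
    ((convex_ellipticSet n lam Lam).linear_image L)
    ((isCompact_ellipticSet n hlam).image hLc)
    ((convex_Iic (-F P)).prod (convex_Ici (-F Q))) (isClosed_Iic.prod isClosed_Ici) hdisj
  have hf : ∀ x y : ℝ, f (x, y) = x * f (1, 0) + y * f (0, 1) := fun x y => by
    have h : ((x, y) : ℝ × ℝ) = x • (1, 0) + y • (0, 1) := by simp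
    rw [h, map_add, map_smul, map_smul, smul_eq_mul, smul_eq_mul]
  set p := f (1, 0) with hp
  set q := f (0, 1) with hq
  have hquad : ∀ x y : ℝ, x ≤ -F P → -F Q ≤ y → v < x * p + y * q := fun x y hx hy => by
    rw [← hf]; exact hfv (x, y) ⟨hx, hy⟩
  have h0 := hquad (-F P) (-F Q) le_rfl le_rfl
  -- `f` is bounded below on the quadrant, which fixes the signs of its coefficients.
  have hp0 : p ≤ 0 := by
    by_contra! hpos
    have hk : 0 ≤ (-F P * p + -F Q * q - v) / p := div_nonneg (by linarith) hpos.le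
    have h := hquad (-F P - (-F P * p + -F Q * q - v) / p) (-F Q) (by linarith) le_rfl
    rw [sub_mul, div_mul_cancel₀ _ hpos.ne'] at h
    linarith
  have hq0 : 0 ≤ q := by
    by_contra! hneg
    have hk : 0 ≤ (-F P * p + -F Q * q - v) / (-q) := div_nonneg (by linarith) (by linarith)
    have h := hquad (-F P) (-F Q + (-F P * p + -F Q * q - v) / (-q)) le_rfl (by linarith)
    rw [add_mul, div_neg, neg_mul (_ / q), div_mul_cancel₀ _ hneg.ne] at h
    linarith
  obtain ⟨A, hA, hle⟩ := exists_increment_le hLam hF (hP.smul (-p)) (hQ.smul q)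
  rw [hF2 (-p) (by linarith) P hP, hF2 q hq0 Q hQ, Matrix.mul_sub, Matrix.trace_sub,
    Matrix.mul_smul, Matrix.mul_smul, Matrix.trace_smul, Matrix.trace_smul, smul_eq_mul,
    smul_eq_mul] at hle
  have hlt := hfu _ ⟨A, hA, rfl⟩
  change f ((A * P).trace, (A * Q).trace) < u at hlt
  rw [hf] at hlt
  linarith

theorem H1_H2_iff_isaacs_representation
    (n : ℕ) (hn : 1 ≤ n) (lam Lam : ℝ) (hlam : 0 < lam) (hLam : lam ≤ Lam)
    (F : Matrix (Fin n) (Fin n) ℝ → ℝ) :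
    (SatisfiesH1 lam Lam F ∧ SatisfiesH2 F) ↔
      ∃ (𝒜 ℬ : Type) (_ : Nonempty 𝒜) (_ : Nonempty ℬ)
        (A : 𝒜 → ℬ → Matrix (Fin n) (Fin n) ℝ),
        (∀ a : 𝒜, ∀ b : ℬ, (A a b).IsSymm ∧
          ((A a b) - lam • (1 : Matrix (Fin n) (Fin n) ℝ)).PosSemidef ∧
          ((Lam • (1 : Matrix (Fin n) (Fin n) ℝ)) - A a b).PosSemidef) ∧
        ∀ M : Matrix (Fin n) (Fin n) ℝ, M.IsSymm →
          (∀ a : 𝒜, BddBelow (Set.range fun b : ℬ => -((A a b) * M).trace)) ∧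
          BddAbove (Set.range fun a : 𝒜 => ⨅ b : ℬ, -((A a b) * M).trace) ∧
          F M = ⨆ a : 𝒜, ⨅ b : ℬ, -((A a b) * M).trace := by
  constructor
  · rintro ⟨h1, h2⟩
    choose A hA hAP hAQ using fun P Q : {M : Matrix (Fin n) (Fin n) ℝ // M.IsSymm} =>
      exists_two_point hlam hLam h1 h2 P.2 Q.2
    have hne : Nonempty {M : Matrix (Fin n) (Fin n) ℝ // M.IsSymm} := ⟨⟨0, Matrix.isSymm_zero⟩⟩
    refine ⟨_, _, hne, hne, A, fun a b => hA a b, fun M hM => ?_⟩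
    have hbelow : ∀ a, BddBelow (Set.range fun b => -((A a b) * M).trace) := fun a => by
      -- Splitting `M = Np - Nm` gives a bound that does not depend on `b`.
      obtain ⟨_, _, Np, Nm, hp, hm, hD, _⟩ := exists_extremal hLam hM
      refine ⟨lam * Nm.trace - Lam * Np.trace, ?_⟩
      rintro _ ⟨b, rfl⟩
      have e1 := (trace_mul_bounds (hA a b) hp).2
      have e2 := (trace_mul_bounds (hA a b) hm).1
      simp only [hD, Matrix.mul_sub, Matrix.trace_sub]
      linarith
    have hle : ∀ a, ⨅ b, -((A a b) * M).trace ≤ F M := fun a =>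
      ciInf_le_of_le (hbelow a) ⟨M, hM⟩ (hAQ a ⟨M, hM⟩)
    have habove : BddAbove (Set.range fun a => ⨅ b, -((A a b) * M).trace) :=
      ⟨F M, by rintro _ ⟨a, rfl⟩; exact hle a⟩
    refine ⟨hbelow, habove, le_antisymm ?_ (ciSup_le hle)⟩
    exact le_ciSup_of_le habove ⟨M, hM⟩ (le_ciInf fun b => hAP ⟨M, hM⟩ b)
  · rintro ⟨𝒜, ℬ, _, _, A, hA, hrep⟩
    refine ⟨fun M N hM hN hpos => ?_, fun t ht M hM => ?_⟩
    · obtain ⟨hb, ha, hFM⟩ := hrep M hM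
      obtain ⟨hb', ha', hFM'⟩ := hrep (M - N) (hM.sub hN)
      have hexp : ∀ a b, -((A a b) * (M - N)).trace
          = -((A a b) * M).trace + ((A a b) * N).trace := fun a b => by
        rw [Matrix.mul_sub, Matrix.trace_sub]; ring
      have hbd := fun a b => trace_mul_bounds (hA a b) hpos
      constructor
      · have : F M ≤ F (M - N) - lam * N.trace := by
          rw [hFM]
          refine ciSup_le fun a => ?_
          have h1 : (⨅ b, -((A a b) * M).trace) + lam * N.trace
              ≤ ⨅ b, -((A a b) * (M - N)).trace := le_ciInf fun b => by
            have := ciInf_le (hb a) b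
            have := (hbd a b).1
            have := hexp a b
            linarith
          have h2 := le_ciSup ha' a
          linarith
        linarith
      · have : F (M - N) ≤ F M + Lam * N.trace := by
          rw [hFM']
          refine ciSup_le fun a => ?_
          have h1 : (⨅ b, -((A a b) * (M - N)).trace) - Lam * N.trace
              ≤ ⨅ b, -((A a b) * M).trace := le_ciInf fun b => by
            have := ciInf_le (hb' a) b
            have := (hbd a b).2
            have := hexp a b
            linarith
          have h2 := le_ciSup ha a
          linarith
        linarith
    · rw [(hrep _ (hM.smul t)).2.2, (hrep M hM).2.2, Real.mul_iSup_of_nonneg ht]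
      refine iSup_congr fun a => ?_
      rw [Real.mul_iInf_of_nonneg ht]
      refine iInf_congr fun b => ?_
      rw [Matrix.mul_smul, Matrix.trace_smul, smul_eq_mul, mul_neg]
end

section
/- Let n ≥ 2 and 0 < λ ≤ Λ. For every α ∈ (−1,∞), the function ξ_α is smooth on ℝⁿ∖{0} and satisfies 𝒫⁺_{λ,Λ}(D²ξ_α(x)) = 0 for every x ∈ ℝⁿ∖{0} (where D²ξ_α(x) denotes the Hessian matrix of ξ_α at x) if and only if α = (Λ/λ)(n−1) − 1. -/
/-!
For `x ≠ 0` the gradient of `ξ_α` is `-c |x|^(-α-2) x`, where `c > 0` is `|α|` (or `1` if `α = 0`);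
see `hasFDerivAt_xiFun`. Differentiating once more,
`D²ξ_α(x) = k (-1 + (α+2) |x|⁻² x xᵀ)` with `k = c |x|^(-α-2) > 0` (`hessianMatrix_xiFun`).
Such a matrix `M` satisfies `(M + k)(M - k(α+1)) = 0`, so its eigenvalues lie in `{k(α+1), -k}`, and
comparing traces shows that `k(α+1)`, which is positive because `α > -1`, is a simple eigenvalue.
Hence `𝒫⁺(D²ξ_α(x)) = k (-λ(α+1) + Λ(n-1))` (`pucciPlus_eq_of_rankOne`), which vanishes exactly for
`α = (Λ/λ)(n-1) - 1`.
-/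


open MeasureTheory Real Set

/-- The positive constant `c` for which `∇ξ_α(x) = -c |x|^(-α-2) x`. -/
noncomputable def xiConst (α : ℝ) : ℝ := if α = 0 then 1 else |α|

lemma xiConst_pos (α : ℝ) : 0 < xiConst α := by
  unfold xiConst
  split_ifs with h
  · exact one_pos
  · exact abs_pos.mpr h

lemma hasFDerivAt_norm_of_ne {n : ℕ} {x : EuclideanSpace ℝ (Fin n)} (hx : x ≠ 0) :
    HasFDerivAt (fun y : EuclideanSpace ℝ (Fin n) => ‖y‖) (‖x‖⁻¹ • innerSL ℝ x) x := by
  have h0 : ‖x‖ ≠ 0 := norm_ne_zero_iff.mpr hx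
  have h := (hasStrictFDerivAt_norm_sq x).hasFDerivAt.sqrt (pow_ne_zero 2 h0)
  simp only [Real.sqrt_sq (norm_nonneg _)] at h
  refine h.congr_fderiv ?_
  ext v
  simp
  field_simp

lemma hasFDerivAt_norm_rpow_of_ne {n : ℕ} (a : ℝ) {x : EuclideanSpace ℝ (Fin n)} (hx : x ≠ 0) :
    HasFDerivAt (fun y : EuclideanSpace ℝ (Fin n) => ‖y‖ ^ a)
      ((a * ‖x‖ ^ (a - 2)) • innerSL ℝ x) x := by
  have h0 : 0 < ‖x‖ := norm_pos_iff.mpr hx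
  have h := (Real.hasDerivAt_rpow_const (p := a) (Or.inl h0.ne')).comp_hasFDerivAt x
    (hasFDerivAt_norm_of_ne hx)
  refine h.congr_fderiv ?_
  rw [smul_smul, show a - 2 = (a - 1) - 1 by ring, Real.rpow_sub_one h0.ne' (a - 1)]
  congr 1
  ring

lemma hasFDerivAt_xiFun {n : ℕ} (α : ℝ) {x : EuclideanSpace ℝ (Fin n)} (hx : x ≠ 0) :
    HasFDerivAt (xiFun α : EuclideanSpace ℝ (Fin n) → ℝ)
      ((-(xiConst α * ‖x‖ ^ (-α - 2))) • innerSL ℝ x) x := by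
  have h0 : 0 < ‖x‖ := norm_pos_iff.mpr hx
  rcases lt_trichotomy α 0 with h | h | h
  · have e : (xiFun α : EuclideanSpace ℝ (Fin n) → ℝ) = fun y => -(‖y‖ ^ (-α)) := by
      funext y; simp [xiFun, h.not_gt, h.ne]
    rw [e]
    refine (hasFDerivAt_norm_rpow_of_ne (-α) hx).neg.congr_fderiv ?_
    rw [← neg_smul, xiConst, if_neg h.ne, abs_of_neg h]
  · have e : (xiFun α : EuclideanSpace ℝ (Fin n) → ℝ) = fun y => -Real.log ‖y‖ := by
      funext y; simp [xiFun, h]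
    rw [e]
    refine ((hasFDerivAt_norm_of_ne hx).log h0.ne').neg.congr_fderiv ?_
    rw [smul_smul, ← neg_smul, xiConst, if_pos h, h, show (-0 - 2 : ℝ) = -(2 : ℕ) by norm_num,
      Real.rpow_neg h0.le, Real.rpow_natCast]
    congr 1
    ring
  · have e : (xiFun α : EuclideanSpace ℝ (Fin n) → ℝ) = fun y => ‖y‖ ^ (-α) := by
      funext y; simp [xiFun, h]
    rw [e]
    refine (hasFDerivAt_norm_rpow_of_ne (-α) hx).congr_fderiv ?_
    rw [xiConst, if_neg h.ne', abs_of_pos h, neg_mul]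

lemma contDiffOn_xiFun {n : ℕ} (α : ℝ) :
    ContDiffOn ℝ (⊤ : ℕ∞) (xiFun α : EuclideanSpace ℝ (Fin n) → ℝ)
      {x : EuclideanSpace ℝ (Fin n) | x ≠ 0} := by
  intro x hx
  have h0 : ‖x‖ ≠ 0 := norm_ne_zero_iff.mpr hx
  have hn : ContDiffAt ℝ (⊤ : ℕ∞) (fun y : EuclideanSpace ℝ (Fin n) => ‖y‖) x :=
    contDiffAt_norm ℝ hx
  apply ContDiffAt.contDiffWithinAt
  unfold xiFun
  split_ifs
  · exact hn.rpow_const_of_ne h0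
  · exact (hn.log h0).neg
  · exact (hn.rpow_const_of_ne h0).neg

lemma hessianMatrix_xiFun {n : ℕ} (α : ℝ) {x : EuclideanSpace ℝ (Fin n)} (hx : x ≠ 0) :
    hessianMatrix (xiFun α) x =
      (xiConst α * ‖x‖ ^ (-α - 2)) •
        (-1 + ((α + 2) / ‖x‖ ^ 2) • Matrix.vecMulVec x.ofLp x.ofLp) := by
  have h0 : 0 < ‖x‖ := norm_pos_iff.mpr hx
  have hev : fderiv ℝ (xiFun α : EuclideanSpace ℝ (Fin n) → ℝ) =ᶠ[nhds x]
      fun y => (-(xiConst α * ‖y‖ ^ (-α - 2))) • innerSL ℝ y := by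
    filter_upwards [isOpen_ne.mem_nhds hx] with y hy
    exact (hasFDerivAt_xiFun α hy).fderiv
  -- Over `ℝ` the conjugate-linear map `innerSL ℝ` is linear; `L` is its linear form.
  obtain ⟨L, hL⟩ : ∃ L : EuclideanSpace ℝ (Fin n) →L[ℝ] EuclideanSpace ℝ (Fin n) →L[ℝ] ℝ,
      ∀ y, L y = innerSL ℝ y := ⟨innerSL ℝ, fun _ => rfl⟩
  have hd : HasFDerivAt
      (fun y : EuclideanSpace ℝ (Fin n) => (-(xiConst α * ‖y‖ ^ (-α - 2))) • innerSL ℝ y)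
      ((-(xiConst α * ‖x‖ ^ (-α - 2))) • L +
        (-(xiConst α • ((-α - 2) * ‖x‖ ^ (-α - 2 - 2)) • innerSL ℝ x)).smulRight (L x)) x := by
    simp only [← hL]
    have h := ((hasFDerivAt_norm_rpow_of_ne (-α - 2) hx).const_mul (xiConst α)).neg
    simp only [← hL] at h
    exact h.smul L.hasFDerivAt
  have hpow : ‖x‖ ^ (-α - 2 - 2) = ‖x‖ ^ (-α - 2) / ‖x‖ ^ 2 := by
    rw [Real.rpow_sub h0 (-α - 2) 2, Real.rpow_two]
  ext i j
  have hij : inner ℝ (EuclideanSpace.single i (1 : ℝ)) (EuclideanSpace.single j (1 : ℝ)) =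
      if i = j then (1 : ℝ) else 0 := by
    simp [EuclideanSpace.inner_single_left]
  have hxi : ∀ l, inner ℝ x (EuclideanSpace.single l (1 : ℝ)) = x.ofLp l := fun l => by
    simp [EuclideanSpace.inner_single_right]
  rw [hessianMatrix, Matrix.of_apply, iteratedFDeriv_two_apply, hev.fderiv_eq, hd.fderiv]
  simp only [_root_.add_apply, _root_.smul_apply,
    ContinuousLinearMap.smulRight_apply, _root_.neg_apply, hL, innerSL_apply_apply,
    smul_eq_mul, Matrix.cons_val_zero, Matrix.cons_val_one, hij, hxi, hpow]
  simp only [Matrix.smul_apply, Matrix.add_apply, Matrix.neg_apply, Matrix.one_apply,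
    Matrix.vecMulVec_apply, smul_eq_mul]
  ring

/-- The quadratic polynomial satisfied by the matrix forces every eigenvalue into
`{k (b - 1), -k}`; the trace then shows that `k (b - 1)` occurs exactly once. -/
lemma pucciPlus_eq_of_rankOne {n : ℕ} (lam Lam k b : ℝ) (hk : 0 < k) (hb : 1 < b)
    (u : Fin n → ℝ) (hu : u ⬝ᵥ u ≠ 0) (M : Matrix (Fin n) (Fin n) ℝ)
    (hM : M = k • (-1 + (b / (u ⬝ᵥ u)) • Matrix.vecMulVec u u)) :
    pucciPlus lam Lam M = k * (-(lam * (b - 1)) + Lam * ((n : ℝ) - 1)) := by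
  have hH : M.IsHermitian := by
    rw [hM]
    ext i j
    simp only [Matrix.conjTranspose_apply, Matrix.smul_apply, Matrix.add_apply, Matrix.neg_apply,
      Matrix.vecMulVec_apply, Matrix.one_apply, smul_eq_mul, star_trivial, eq_comm (a := j)]
    ring
  have hact : ∀ v : Fin n → ℝ,
      M.mulVec v = k • (-v + (b / (u ⬝ᵥ u) * (u ⬝ᵥ v)) • u) := by
    intro v
    rw [hM, Matrix.smul_mulVec, Matrix.add_mulVec, Matrix.neg_mulVec, Matrix.one_mulVec,
      Matrix.smul_mulVec, Matrix.vecMulVec_mulVec]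
    ext i
    simp only [Pi.smul_apply, Pi.add_apply, Pi.neg_apply, MulOpposite.smul_eq_mul_unop,
      MulOpposite.unop_op, smul_eq_mul]
    ring
  have hquad : ∀ v : Fin n → ℝ,
      M.mulVec (M.mulVec v) = (k * (b - 2)) • M.mulVec v + (k ^ 2 * (b - 1)) • v := by
    intro v
    rw [hact (M.mulVec v), hact v]
    simp only [dotProduct_smul, dotProduct_add, dotProduct_neg]
    ext i
    simp
    field_simp
    ring
  have hev : ∀ j, hH.eigenvalues j = k * (b - 1) ∨ hH.eigenvalues j = -k := by
    intro j
    have hv := hH.mulVec_eigenvectorBasis j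
    set w : EuclideanSpace ℝ (Fin n) := hH.eigenvectorBasis j with hw
    set μ := hH.eigenvalues j
    have hw0 : w.ofLp ≠ 0 := by
      intro h
      apply hH.eigenvectorBasis.orthonormal.ne_zero j
      ext i
      exact congrFun h i
    have hq := hquad w.ofLp
    rw [hv, Matrix.mulVec_smul, hv] at hq
    obtain ⟨i, hi⟩ := Function.ne_iff.mp hw0
    have hqi := congrFun hq i
    simp only [Pi.smul_apply, Pi.add_apply, smul_eq_mul] at hqi
    have hz : ((μ - k * (b - 1)) * (μ + k)) * w.ofLp i = 0 := by linear_combination hqi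
    rcases mul_eq_zero.mp ((mul_eq_zero.mp hz).resolve_right hi) with h | h
    · exact Or.inl (by linarith)
    · exact Or.inr (by linarith)
  have hp : 0 < k * (b - 1) := mul_pos hk (by linarith)
  have hpos : ∀ j, 0 < hH.eigenvalues j ↔ hH.eigenvalues j = k * (b - 1) := fun j =>
    ⟨fun h => (hev j).resolve_right (by linarith), fun h => h ▸ hp⟩
  have hneg : ∀ j, hH.eigenvalues j < 0 ↔ ¬ hH.eigenvalues j = k * (b - 1) := fun j =>
    ⟨fun h => by linarith, fun h => by rw [(hev j).resolve_left h]; linarith⟩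
  have htr : ∑ j, hH.eigenvalues j = k * (b - n) := by
    have h := hH.trace_eq_sum_eigenvalues
    simp only [RCLike.ofReal_real_eq_id, id] at h
    rw [← h, hM, Matrix.trace_smul, Matrix.trace_add, Matrix.trace_neg, Matrix.trace_one,
      Matrix.trace_smul, Matrix.trace_vecMulVec]
    simp only [smul_eq_mul, Fintype.card_fin, div_mul_cancel₀ b hu]
    ring
  rw [pucciPlus, dif_pos hH]
  simp only [hpos, hneg]
  set s := Finset.univ.filter fun j => hH.eigenvalues j = k * (b - 1)
  set t := Finset.univ.filter fun j => ¬ hH.eigenvalues j = k * (b - 1)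
  have hs : ∑ j ∈ s, hH.eigenvalues j = (s.card : ℝ) * (k * (b - 1)) := by
    rw [Finset.sum_congr rfl fun j hj => (Finset.mem_filter.mp hj).2]
    rw [Finset.sum_const, nsmul_eq_mul]
  have ht : ∑ j ∈ t, hH.eigenvalues j = (t.card : ℝ) * (-k) := by
    rw [Finset.sum_congr rfl fun j hj => (hev j).resolve_left (Finset.mem_filter.mp hj).2]
    rw [Finset.sum_const, nsmul_eq_mul]
  have hcard : (s.card : ℝ) + t.card = n := by
    have h := Finset.card_filter_add_card_filter_not (s := (Finset.univ : Finset (Fin n)))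
      (fun j => hH.eigenvalues j = k * (b - 1))
    rw [Finset.card_univ, Fintype.card_fin] at h
    exact_mod_cast h
  have hsum : ∑ j ∈ s, hH.eigenvalues j + ∑ j ∈ t, hH.eigenvalues j = k * (b - n) := by
    rw [← htr]
    exact Finset.sum_filter_add_sum_filter_not _ _ _
  rw [hs, ht] at hsum ⊢
  have h1 : (s.card : ℝ) = 1 := by
    -- Substituting `|t| = n - |s|` into the trace identity leaves `|s| (k b) = k b`.
    have hne : k * b ≠ 0 := (mul_pos hk (by linarith)).ne'
    apply mul_right_cancel₀ hne
    linear_combination hsum + k * hcard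
  have h2 : (t.card : ℝ) = n - 1 := by linarith
  rw [h1, h2]
  ring

lemma pucciPlus_hessianMatrix_xiFun {n : ℕ} (lam Lam : ℝ) {α : ℝ} (hα : -1 < α)
    {x : EuclideanSpace ℝ (Fin n)} (hx : x ≠ 0) :
    pucciPlus lam Lam (hessianMatrix (xiFun α) x) =
      (xiConst α * ‖x‖ ^ (-α - 2)) * (-(lam * (α + 1)) + Lam * ((n : ℝ) - 1)) := by
  have h0 : 0 < ‖x‖ := norm_pos_iff.mpr hx
  have hdot : x.ofLp ⬝ᵥ x.ofLp = ‖x‖ ^ 2 := by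
    rw [EuclideanSpace.real_norm_sq_eq]
    simp [dotProduct, sq]
  rw [pucciPlus_eq_of_rankOne lam Lam (xiConst α * ‖x‖ ^ (-α - 2)) (α + 2)
    (mul_pos (xiConst_pos α) (Real.rpow_pos_of_pos h0 _)) (by linarith) x.ofLp
    (by rw [hdot]; exact (pow_pos h0 2).ne') _ (by rw [hdot]; exact hessianMatrix_xiFun α hx)]
  ring

theorem pucci_plus_radial_fundamental_exponent
    (n : ℕ) (hn : 2 ≤ n) (lam Lam : ℝ) (hlam : 0 < lam) (hLam : lam ≤ Lam)
    (α : ℝ) (hα : -1 < α) :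
    (ContDiffOn ℝ (⊤ : ℕ∞) (xiFun α : EuclideanSpace ℝ (Fin n) → ℝ)
        {x : EuclideanSpace ℝ (Fin n) | x ≠ 0} ∧
      ∀ x : EuclideanSpace ℝ (Fin n), x ≠ 0 →
        pucciPlus lam Lam (hessianMatrix (xiFun α) x) = 0) ↔
      α = (Lam / lam) * ((n : ℝ) - 1) - 1 := by
  have key : -(lam * (α + 1)) + Lam * ((n : ℝ) - 1) = 0 ↔
      α = (Lam / lam) * ((n : ℝ) - 1) - 1 := by
    field_simp
    constructor <;> intro h <;> linarith
  rw [← key]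
  constructor
  · rintro ⟨-, h⟩
    have hx : (EuclideanSpace.single (⟨0, by omega⟩ : Fin n) (1 : ℝ)) ≠ 0 := by
      rw [← norm_ne_zero_iff]
      simp
    have := h _ hx
    rw [pucciPlus_hessianMatrix_xiFun lam Lam hα hx] at this
    refine (mul_eq_zero.mp this).resolve_left (mul_pos (xiConst_pos α) ?_).ne'
    exact Real.rpow_pos_of_pos (norm_pos_iff.mpr hx) _
  · intro h
    refine ⟨contDiffOn_xiFun α, fun x hx => ?_⟩
    rw [pucciPlus_hessianMatrix_xiFun lam Lam hα hx, h, mul_zero]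
end

section
/- Let n ≥ 2, 0 < λ ≤ Λ, and let F : Sym_n → ℝ satisfy (H1) and (H2) with constants λ, Λ. Let Ω ⊆ ℝⁿ be open, let Φ be a C² function on Ω with Φ > 0 and F(D²Φ(x)) = 0 for all x ∈ Ω (where D²Φ(x) is the Hessian matrix of Φ at x), and let τ ∈ (0,1). Then the function v = Φ^τ is C² on Ω and satisfies F(D²v(x)) ≥ λ·τ·(1−τ)·Φ(x)^{τ−2}·|∇Φ(x)|² for every x ∈ Ω. -/
/-!
Differentiating `v = Φ ^ τ` twice gives
`D²v = τ Φ^(τ-1) D²Φ - τ (1-τ) Φ^(τ-2) ∇Φ ⊗ ∇Φ` (`hessianMatrix_rpow`). By homogeneity (H2), the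
first matrix is sent to `τ Φ^(τ-1) F(D²Φ) = 0`. The subtracted matrix is positive semidefinite
with trace `τ (1-τ) Φ^(τ-2) |∇Φ|²`, so the lower bound in (H1) yields the claim.
-/

open MeasureTheory Real Set

lemma hessianMatrix_apply {n : ℕ} (φ : EuclideanSpace ℝ (Fin n) → ℝ)
    (x : EuclideanSpace ℝ (Fin n)) (i j : Fin n) :
    hessianMatrix φ x i j =
      fderiv ℝ (fderiv ℝ φ) x (EuclideanSpace.single i 1) (EuclideanSpace.single j 1) := by
  simp [hessianMatrix, iteratedFDeriv_two_apply]

lemma hessianMatrix_isSymm {n : ℕ} {φ : EuclideanSpace ℝ (Fin n) → ℝ}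
    {x : EuclideanSpace ℝ (Fin n)} (hφ : ContDiffAt ℝ 2 φ x) :
    (hessianMatrix φ x).IsSymm := by
  have h : IsSymmSndFDerivAt ℝ φ x := hφ.isSymmSndFDerivAt (by simp)
  ext i j
  rw [Matrix.transpose_apply, hessianMatrix_apply, hessianMatrix_apply]
  exact h.eq _ _

lemma fderiv_single_eq_gradient {n : ℕ} (φ : EuclideanSpace ℝ (Fin n) → ℝ)
    (x : EuclideanSpace ℝ (Fin n)) (i : Fin n) :
    fderiv ℝ φ x (EuclideanSpace.single i 1) = gradient φ x i := by
  have h : inner ℝ (gradient φ x) (EuclideanSpace.single i (1 : ℝ)) =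
      fderiv ℝ φ x (EuclideanSpace.single i 1) := by
    simp only [gradient, InnerProductSpace.toDual_symm_apply]
  rw [← h, EuclideanSpace.inner_single_right]
  simp

/-- The chain rule for the Hessian of a power, written as a multiple of `D²φ` minus a rank-one
matrix; when `0 ≤ τ ≤ 1` the multiple is nonnegative and the rank-one matrix is positive
semidefinite. -/
lemma hessianMatrix_rpow {n : ℕ} {φ : EuclideanSpace ℝ (Fin n) → ℝ}
    {x : EuclideanSpace ℝ (Fin n)} (hφ : ContDiffAt ℝ 2 φ x) (hpos : 0 < φ x) (τ : ℝ) :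
    hessianMatrix (fun y => φ y ^ τ) x =
      (τ * φ x ^ (τ - 1)) • hessianMatrix φ x -
        (τ * (1 - τ) * φ x ^ (τ - 2)) •
          Matrix.vecMulVec (gradient φ x).ofLp (gradient φ x).ofLp := by
  -- The first derivative is needed near `x`, where `φ` stays differentiable and positive.
  have hfirst : fderiv ℝ (fun y => φ y ^ τ) =ᶠ[nhds x]
      fun y => (τ * φ y ^ (τ - 1)) • fderiv ℝ φ y := by
    filter_upwards [hφ.eventually (by simp), hφ.continuousAt.eventually (lt_mem_nhds hpos)]
      with y hy hy0
    exact ((hy.differentiableAt (by norm_num)).hasFDerivAt.rpow_const (Or.inl hy0.ne')).fderiv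
  have hd : HasFDerivAt φ (fderiv ℝ φ x) x := (hφ.differentiableAt (by norm_num)).hasFDerivAt
  have hd2 : HasFDerivAt (fderiv ℝ φ) (fderiv ℝ (fderiv ℝ φ) x) x :=
    ((hφ.fderiv_right (m := 1) (by norm_num)).differentiableAt (by norm_num)).hasFDerivAt
  have hcoef := (hd.rpow_const (p := τ - 1) (Or.inl hpos.ne')).const_mul τ
  have hsecond := (hcoef.smul hd2).congr_of_eventuallyEq hfirst
  ext i j
  rw [hessianMatrix_apply, hsecond.fderiv]
  simp only [Matrix.sub_apply, Matrix.smul_apply, Matrix.vecMulVec_apply, hessianMatrix_apply,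
    ← fderiv_single_eq_gradient, _root_.add_apply, _root_.smul_apply,
    ContinuousLinearMap.smulRight_apply, smul_eq_mul]
  rw [show τ - 1 - 1 = τ - 2 by ring]
  ring


theorem bending_the_fundamental_solution
    (n : ℕ) (hn : 2 ≤ n) (lam Lam : ℝ) (hlam : 0 < lam) (hLam : lam ≤ Lam)
    (F : Matrix (Fin n) (Fin n) ℝ → ℝ)
    (hF1 : SatisfiesH1 lam Lam F) (hF2 : SatisfiesH2 F)
    (Ω : Set (EuclideanSpace ℝ (Fin n))) (hΩ : IsOpen Ω)
    (Φ : EuclideanSpace ℝ (Fin n) → ℝ)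
    (hΦ : ContDiffOn ℝ 2 Φ Ω) (hΦpos : ∀ x ∈ Ω, 0 < Φ x)
    (hΦsol : ∀ x ∈ Ω, F (hessianMatrix Φ x) = 0)
    (τ : ℝ) (hτ0 : 0 < τ) (hτ1 : τ < 1) :
    ContDiffOn ℝ 2 (fun x => Φ x ^ τ) Ω ∧
    ∀ x ∈ Ω,
      lam * τ * (1 - τ) * Φ x ^ (τ - 2) * ‖gradient Φ x‖ ^ 2 ≤
        F (hessianMatrix (fun y => Φ y ^ τ) x) := by
  refine ⟨hΦ.rpow_const_of_ne fun x hx => (hΦpos x hx).ne', fun x hx => ?_⟩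
  have hpos := hΦpos x hx
  have hφ : ContDiffAt ℝ 2 Φ x := hΦ.contDiffAt (hΩ.mem_nhds hx)
  have hsymm := hessianMatrix_isSymm hφ
  have ha : 0 ≤ τ * Φ x ^ (τ - 1) := by positivity
  have hb : 0 ≤ τ * (1 - τ) * Φ x ^ (τ - 2) :=
    mul_nonneg (mul_nonneg hτ0.le (sub_nonneg.2 hτ1.le)) (by positivity)
  have hN : ((τ * (1 - τ) * Φ x ^ (τ - 2)) •
      Matrix.vecMulVec (gradient Φ x).ofLp (gradient Φ x).ofLp).PosSemidef := by
    have h := Matrix.posSemidef_vecMulVec_self_star (gradient Φ x).ofLp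
    rw [star_trivial] at h
    exact h.smul hb
  have hNsymm := hN.isHermitian
  rw [Matrix.IsHermitian, Matrix.conjTranspose_eq_transpose_of_trivial] at hNsymm
  have hell := (hF1 _ _ (hsymm.smul (τ * Φ x ^ (τ - 1))) hNsymm hN).1
  rw [← hessianMatrix_rpow hφ hpos, hF2 _ ha _ hsymm, hΦsol x hx, mul_zero, sub_zero,
    Matrix.trace_smul, Matrix.trace_vecMulVec, smul_eq_mul] at hell
  have hnorm : ‖gradient Φ x‖ ^ 2 = (gradient Φ x).ofLp ⬝ᵥ (gradient Φ x).ofLp := by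
    rw [EuclideanSpace.real_norm_sq_eq]
    simp only [dotProduct, sq]
  rw [hnorm]
  linarith
end
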